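/- arXiv:1905.05886 — 3 statements merged into one kernel-verified Lean document; each statement's English description precedes it below -/
import Mathlib

section
/- Let A be a skew left brace such that A = B + C, where B and C are left ideals of A that are trivial as skew left braces. Then (c + b) ∘ β − β = c + b + c*β for all b,β ∈ B and c ∈ C. -/
/-- A skew left brace: `(A,+)` and `(A,∘)` are groups (sharing the same identity `0`)
such that `a ∘ (b + c) = a ∘ b - a + a ∘ c`.  Here `circ` is the operation `∘` and
`cinv a` is the inverse of `a` in `(A,∘)`. -/
class SkewBrace (A : Type*) extends AddGroup A where
  circ : A → A → A
  cinv : A → A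
  circ_assoc : ∀ a b c : A, circ (circ a b) c = circ a (circ b c)
  zero_circ : ∀ a : A, circ 0 a = a
  circ_zero : ∀ a : A, circ a 0 = a
  cinv_circ : ∀ a : A, circ (cinv a) a = 0
  circ_cinv : ∀ a : A, circ a (cinv a) = 0
  compat : ∀ a b c : A, circ a (b + c) = circ a b + -a + circ a c

open SkewBrace

/-- `lam a b = -a + a ∘ b`. -/
def lam {A : Type*} [SkewBrace A] (a b : A) : A := -a + circ a b

/-- The star operation `a * b = lam a b - b = -a + a ∘ b - b`. -/
def bstar {A : Type*} [SkewBrace A] (a b : A) : A := lam a b - b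

/-- `X * Y`: the subgroup of `(A,+)` generated by `{x * y : x ∈ X, y ∈ Y}`. -/
def starSpan {A : Type*} [SkewBrace A] (X Y : Set A) : AddSubgroup A :=
  AddSubgroup.closure {z | ∃ x ∈ X, ∃ y ∈ Y, z = bstar x y}

/-- The right series of `st`: `rseriesOf st 0 = A = A^(1)` and
`rseriesOf st n = A^(n+1)`, so that `A^(n+1) = A^(n) * A`. -/
def rseriesOf {G : Type*} [AddGroup G] (st : G → G → G) : ℕ → AddSubgroup G
  | 0 => ⊤
  | n + 1 => AddSubgroup.closure {z | ∃ u ∈ rseriesOf st n, ∃ a : G, z = st u a}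

/-!
The maps `λ` form an action of `(A,∘)` on `A`, and `a + b = a ∘ λ_a⁻¹(b)`, so
`λ_(a + b) = λ_a λ_(λ_a⁻¹(b))`. If `b` lies in a trivial left ideal `B`, then so does `λ_a⁻¹(b)`,
which therefore fixes `B` pointwise; hence `λ_(a + b)` and `λ_a` agree on `B`.
-/

namespace SkewBrace

variable {A : Type*} [SkewBrace A]

theorem add_lam (a b : A) : a + lam a b = circ a b :=
  add_neg_cancel_left a _

theorem circ_sub_right (a b : A) : circ a b - b = a + bstar a b := by
  rw [bstar, ← add_sub_assoc, add_lam]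

theorem add_eq_circ_iff (a b : A) : a + b = circ a b ↔ lam a b = b := by
  rw [← add_lam, add_right_inj, eq_comm]

theorem lam_zero_left (b : A) : lam 0 b = b := by
  rw [lam, zero_circ, neg_zero, zero_add]

theorem lam_circ (a b c : A) : lam (circ a b) c = lam a (lam b c) :=
  calc
    lam (circ a b) c = -circ a b + circ a (b + lam b c) := by rw [lam, circ_assoc, add_lam]
    _ = -a + circ a (lam b c) := by rw [compat, add_assoc, neg_add_cancel_left]
    _ = lam a (lam b c) := rfl

theorem lam_lam_cinv (a b : A) : lam a (lam (cinv a) b) = b := by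
  rw [← lam_circ, circ_cinv, lam_zero_left]

theorem circ_lam_cinv (a b : A) : circ a (lam (cinv a) b) = a + b := by
  rw [← add_lam, lam_lam_cinv]

theorem lam_add_left (a b c : A) : lam (a + b) c = lam a (lam (lam (cinv a) b) c) := by
  rw [← circ_lam_cinv, lam_circ]

end SkewBrace

theorem stmt5_general {A : Type*} [SkewBrace A] (B : Set A)
    (hB : ∀ a : A, ∀ x ∈ B, lam a x ∈ B)
    (hBtriv : ∀ x ∈ B, ∀ y ∈ B, x + y = circ x y)
    (a : A) {b β : A} (hb : b ∈ B) (hβ : β ∈ B) :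
    circ (a + b) β - β = a + b + bstar a β := by
  have lam_fix : lam (lam (cinv a) b) β = β :=
    (add_eq_circ_iff _ _).mp (hBtriv _ (hB _ b hb) β hβ)
  have bstar_eq : bstar (a + b) β = bstar a β := by
    rw [bstar, lam_add_left, lam_fix, bstar]
  rw [circ_sub_right, bstar_eq]

/-- if `A = B + C` with `B, C` left ideals trivial as skew braces, then
`(c + b) ∘ β - β = c + b + c*β` for all `b, β ∈ B`, `c ∈ C`. -/
theorem stmt5 {A : Type*} [SkewBrace A] (B C : AddSubgroup A)
    (hB : ∀ a : A, ∀ x ∈ B, lam a x ∈ B)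
    (hC : ∀ a : A, ∀ x ∈ C, lam a x ∈ C)
    (hBtriv : ∀ x ∈ B, ∀ y ∈ B, x + y = circ x y)
    (hCtriv : ∀ x ∈ C, ∀ y ∈ C, x + y = circ x y)
    (hfact : ∀ a : A, ∃ b ∈ B, ∃ c ∈ C, a = b + c) :
    ∀ b ∈ B, ∀ β ∈ B, ∀ c ∈ C, circ (c + b) β - β = c + b + bstar c β :=
  fun _ hb _ hβ c _ => stmt5_general B hB hBtriv c hb hβ
end

section
/- Let A be a finite characteristically simple skew left brace (A has at least two elements and its only characteristic ideals are 0 and A). Then there exists a simple skew left brace S and a positive integer n such that A is isomorphic, as a skew left brace, to the direct product S^n. -/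
open SkewBrace

/-- An ideal of a skew brace: a left ideal that is normal in `(A,+)` and in `(A,∘)`. -/
def IsIdeal {A : Type*} [SkewBrace A] (I : AddSubgroup A) : Prop :=
  (∀ a : A, ∀ x ∈ I, lam a x ∈ I) ∧ I.Normal ∧
  (∀ a : A, ∀ x ∈ I, circ (circ a x) (cinv a) ∈ I)

/-- A skew brace automorphism: a bijection preserving `+` and `∘`. -/
def IsBrAut {A : Type*} [SkewBrace A] (σ : A → A) : Prop :=
  Function.Bijective σ ∧ (∀ x y : A, σ (x + y) = σ x + σ y) ∧
  (∀ x y : A, σ (circ x y) = circ (σ x) (σ y))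

/-- A characteristic ideal: an ideal invariant under all skew brace automorphisms. -/
def IsCharIdeal {A : Type*} [SkewBrace A] (I : AddSubgroup A) : Prop :=
  IsIdeal I ∧ ∀ σ : A → A, IsBrAut σ → σ '' (I : Set A) = (I : Set A)

/-- A characteristically simple skew brace: nontrivial, and its only characteristic
ideals are `0` and `A`. -/
def IsCharSimple (A : Type*) [SkewBrace A] : Prop :=
  Nontrivial A ∧ ∀ I : AddSubgroup A, IsCharIdeal I → I = ⊥ ∨ I = ⊤

/-- A simple skew brace: nontrivial, and its only ideals are `0` and `A`. -/
def IsSimpleSB (A : Type*) [SkewBrace A] : Prop :=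
  Nontrivial A ∧ ∀ I : AddSubgroup A, IsIdeal I → I = ⊥ ∨ I = ⊤

/-- The addition of a skew brace, as a function (for explicit instance arguments). -/
def braceAdd (A : Type*) [SkewBrace A] : A → A → A := fun x y => x + y

/-!
Let `M` be a maximal ideal, `π : A → S = A / M` the projection, and consider the homomorphisms
`π ∘ σ : A → S` for `σ` in the automorphism group. Their kernels intersect in a characteristic ideal
contained in `M`, which must be `0`. By the descending chain condition finitely many of these
kernels already intersect in `0`; choose such a finite family irredundantly. Then for each member
`f i` the intersection of the other kernels is an ideal not contained in `ker (f i)`, so `f i` maps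
it onto the simple skew brace `S`, as in the Chinese remainder theorem. Hence the `f i` together
form an isomorphism from `A` onto a power of `S`.
-/

namespace SkewBrace

variable {A : Type*} [SkewBrace A]

/-- The group `(A,∘)`, on a type synonym so that the library's lemmas on multiplicative groups
apply to `∘`. -/
def CircGroup (A : Type*) : Type _ := A

instance : Group (CircGroup A) where
  mul := circ (A := A)
  one := (0 : A)
  inv := cinv (A := A)
  mul_assoc := circ_assoc (A := A)
  one_mul := zero_circ (A := A)
  mul_one := circ_zero (A := A)
  inv_mul_cancel := cinv_circ (A := A)

theorem circ_cinv_cancel_left (a b : A) : circ a (circ (cinv a) b) = b :=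
  mul_inv_cancel_left (G := CircGroup A) a b

theorem cinv_cinv (a : A) : cinv (cinv a) = a :=
  inv_inv (G := CircGroup A) a

theorem cinv_circ_rev (a b : A) : cinv (circ a b) = circ (cinv b) (cinv a) :=
  mul_inv_rev (G := CircGroup A) a b

theorem eq_cinv_of_circ_eq_zero {a b : A} (h : circ a b = 0) : b = cinv a :=
  eq_inv_of_mul_eq_one_right (α := CircGroup A) h

theorem lam_circ_cinv (a b : A) : lam a (circ (cinv a) b) = -a + b := by
  rw [lam, circ_cinv_cancel_left]

theorem lam_cinv_neg_add (a b : A) : lam (cinv a) (-a + b) = circ (cinv a) b := by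
  have h := compat (cinv a) a (-a + b)
  rw [add_neg_cancel_left, cinv_circ, zero_add] at h
  exact h.symm

/-- Homomorphisms of skew braces, encoded as additive homomorphisms that also preserve `∘`. -/
def IsBraceHom {B : Type*} [SkewBrace B] (f : A →+ B) : Prop :=
  ∀ x y : A, f (circ x y) = circ (f x) (f y)

namespace IsBraceHom

variable {B C : Type*} [SkewBrace B] [SkewBrace C] {f : A →+ B}

theorem comp {g : B →+ C} (hg : IsBraceHom g) (hf : IsBraceHom f) : IsBraceHom (g.comp f) :=
  fun x y => (congrArg g (hf x y)).trans (hg _ _)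

theorem map_cinv (hf : IsBraceHom f) (a : A) : f (cinv a) = cinv (f a) :=
  eq_cinv_of_circ_eq_zero <| by rw [← hf, circ_cinv, map_zero]

theorem map_lam (hf : IsBraceHom f) (a b : A) : f (lam a b) = lam (f a) (f b) := by
  rw [lam, lam, map_add, map_neg, hf]

theorem map_conj (hf : IsBraceHom f) (a b : A) :
    f (circ (circ a b) (cinv a)) = circ (circ (f a) (f b)) (cinv (f a)) := by
  rw [hf, hf, hf.map_cinv]

end IsBraceHom

end SkewBrace

namespace IsIdeal

variable {A B : Type*} [SkewBrace A] [SkewBrace B] {I : AddSubgroup A}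

theorem lam_mem (hI : IsIdeal I) (a : A) {x : A} (hx : x ∈ I) : lam a x ∈ I :=
  hI.1 a x hx

theorem normal (hI : IsIdeal I) : I.Normal :=
  hI.2.1

theorem conj_mem (hI : IsIdeal I) (a : A) {x : A} (hx : x ∈ I) : circ (circ a x) (cinv a) ∈ I :=
  hI.2.2 a x hx

theorem bot : IsIdeal (⊥ : AddSubgroup A) := by
  refine ⟨fun a x hx => ?_, inferInstance, fun a x hx => ?_⟩ <;>
    rw [AddSubgroup.mem_bot] at hx ⊢ <;> subst hx
  · rw [lam, circ_zero, neg_add_cancel]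
  · rw [circ_zero, circ_cinv]

theorem iInf {ι : Sort*} {J : ι → AddSubgroup A} (hJ : ∀ i, IsIdeal (J i)) :
    IsIdeal (⨅ i, J i) := by
  refine ⟨fun a x hx => ?_, AddSubgroup.normal_iInf_normal fun i => (hJ i).normal,
    fun a x hx => ?_⟩ <;> rw [AddSubgroup.mem_iInf] at hx ⊢
  · exact fun i => (hJ i).lam_mem a (hx i)
  · exact fun i => (hJ i).conj_mem a (hx i)

theorem finset_inf {ι : Type*} {J : ι → AddSubgroup A} (hJ : ∀ i, IsIdeal (J i)) (T : Finset ι) :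
    IsIdeal (T.inf J) := by
  rw [Finset.inf_eq_iInf]
  exact iInf fun i => iInf fun _ => hJ i

theorem comap {f : A →+ B} (hf : IsBraceHom f) {J : AddSubgroup B} (hJ : IsIdeal J) :
    IsIdeal (J.comap f) := by
  refine ⟨fun a x hx => ?_, hJ.normal.comap f, fun a x hx => ?_⟩ <;>
    rw [AddSubgroup.mem_comap] at hx ⊢
  · exact hf.map_lam a x ▸ hJ.lam_mem (f a) hx
  · exact hf.map_conj a x ▸ hJ.conj_mem (f a) hx

theorem ker {f : A →+ B} (hf : IsBraceHom f) : IsIdeal f.ker :=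
  bot.comap hf

theorem map {f : A →+ B} (hf : IsBraceHom f) (hsurj : Function.Surjective f) (hI : IsIdeal I) :
    IsIdeal (I.map f) := by
  refine ⟨fun b y hy => ?_, hI.normal.map f hsurj, fun b y hy => ?_⟩ <;>
    obtain ⟨a, rfl⟩ := hsurj b <;> obtain ⟨x, hx, rfl⟩ := hy
  · exact ⟨_, hI.lam_mem a hx, hf.map_lam a x⟩
  · exact ⟨_, hI.conj_mem a hx, hf.map_conj a x⟩

theorem circ_mem (hI : IsIdeal I) {x y : A} (hx : x ∈ I) (hy : y ∈ I) : circ x y ∈ I :=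
  add_lam x y ▸ I.add_mem hx (hI.lam_mem x hy)

theorem neg_add_mem_iff (hI : IsIdeal I) {a b : A} : -a + b ∈ I ↔ circ (cinv a) b ∈ I :=
  ⟨fun h => lam_cinv_neg_add a b ▸ hI.lam_mem (cinv a) h,
    fun h => lam_circ_cinv a b ▸ hI.lam_mem a h⟩

theorem neg_circ_add_circ_mem (hI : IsIdeal I) {a a' b b' : A} (ha : -a + a' ∈ I)
    (hb : -b + b' ∈ I) : -circ a b + circ a' b' ∈ I := by
  rw [hI.neg_add_mem_iff] at ha hb ⊢
  have h := hI.circ_mem (hI.conj_mem (cinv b) ha) hb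
  simpa only [cinv_cinv, cinv_circ_rev, circ_assoc, circ_cinv_cancel_left] using h

theorem neg_cinv_add_cinv_mem (hI : IsIdeal I) {a a' : A} (ha : -a + a' ∈ I) :
    -cinv a + cinv a' ∈ I := by
  have ha' : -a' + a ∈ I := by simpa only [neg_add_rev, neg_neg] using I.neg_mem ha
  rw [hI.neg_add_mem_iff] at ha' ⊢
  have h := hI.conj_mem a' ha'
  rwa [circ_cinv_cancel_left, ← cinv_cinv a] at h

/-- The quotient of a skew brace by an ideal, carried by the additive quotient group. -/
abbrev quotient (hI : IsIdeal I) : SkewBrace (A ⧸ I) :=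
  haveI := hI.normal
  { QuotientAddGroup.Quotient.addGroup I with
    circ := Quotient.map₂ circ fun _ _ ha _ _ hb => QuotientAddGroup.leftRel_apply.2 <|
      hI.neg_circ_add_circ_mem (QuotientAddGroup.leftRel_apply.1 ha)
        (QuotientAddGroup.leftRel_apply.1 hb)
    cinv := Quotient.map cinv fun _ _ ha => QuotientAddGroup.leftRel_apply.2 <|
      hI.neg_cinv_add_cinv_mem (QuotientAddGroup.leftRel_apply.1 ha)
    circ_assoc := by
      rintro ⟨a⟩ ⟨b⟩ ⟨c⟩
      exact congrArg (QuotientAddGroup.mk (s := I)) (circ_assoc a b c)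
    zero_circ := by
      rintro ⟨a⟩
      exact congrArg (QuotientAddGroup.mk (s := I)) (zero_circ a)
    circ_zero := by
      rintro ⟨a⟩
      exact congrArg (QuotientAddGroup.mk (s := I)) (circ_zero a)
    cinv_circ := by
      rintro ⟨a⟩
      exact congrArg (QuotientAddGroup.mk (s := I)) (cinv_circ a)
    circ_cinv := by
      rintro ⟨a⟩
      exact congrArg (QuotientAddGroup.mk (s := I)) (circ_cinv a)
    compat := by
      rintro ⟨a⟩ ⟨b⟩ ⟨c⟩
      exact congrArg (QuotientAddGroup.mk (s := I)) (compat a b c) }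

theorem exists_surjective_ker_eq {A : Type u} [SkewBrace A] {I : AddSubgroup A} (hI : IsIdeal I) :
    ∃ (B : Type u) (_ : SkewBrace B) (π : A →+ B),
      IsBraceHom π ∧ Function.Surjective π ∧ π.ker = I :=
  haveI := hI.normal
  ⟨A ⧸ I, hI.quotient, QuotientAddGroup.mk' I, fun _ _ => rfl,
    QuotientAddGroup.mk'_surjective I, QuotientAddGroup.ker_mk' I⟩

end IsIdeal

section Simple

variable {A S : Type*} [SkewBrace A] [SkewBrace S]

theorem isSimpleSB_of_maximal_ker {f : A →+ S} (hf : IsBraceHom f) (hsurj : Function.Surjective f)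
    (hmax : Maximal (fun I : AddSubgroup A => IsIdeal I ∧ I ≠ ⊤) f.ker) : IsSimpleSB S := by
  have hbot : (⊥ : AddSubgroup S) ≠ ⊤ := fun h =>
    hmax.prop.2 <| (congrArg (AddSubgroup.comap f) h).trans (AddSubgroup.comap_top f)
  refine ⟨AddSubgroup.nontrivial_iff.1 ⟨_, _, hbot⟩, fun J hJ => ?_⟩
  refine or_iff_not_imp_right.2 fun hJtop => ?_
  have hcomap : J.comap f ≠ ⊤ := fun h =>
    hJtop <| AddSubgroup.comap_injective hsurj (h.trans (AddSubgroup.comap_top f).symm)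
  have hker : f.ker = J.comap f :=
    hmax.eq_of_le ⟨hJ.comap hf, hcomap⟩ (f.ker_le_comap J)
  exact AddSubgroup.comap_injective hsurj hker.symm

theorem IsSimpleSB.map_eq_top (hS : IsSimpleSB S) {f : A →+ S} (hf : IsBraceHom f)
    (hsurj : Function.Surjective f) {K : AddSubgroup A} (hK : IsIdeal K) (hle : ¬ K ≤ f.ker) :
    K.map f = ⊤ :=
  (hS.2 _ (hK.map hf hsurj)).resolve_left fun h => hle ((K.map_eq_bot_iff).1 h)

theorem IsSimpleSB.surjective_pi (hS : IsSimpleSB S) {ι : Type*} [DecidableEq ι] {f : ι → A →+ S}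
    (hf : ∀ i, IsBraceHom (f i)) (hsurj : ∀ i, Function.Surjective (f i)) {T : Finset ι}
    (hT : ∀ i ∈ T, ¬ (T.erase i).inf (fun j => (f j).ker) ≤ (f i).ker) :
    Function.Surjective fun (x : A) (i : T) => f i x := by
  intro s
  let F : A →+ (T → S) := AddMonoidHom.pi fun i => f i
  suffices s ∈ F.range from this
  refine AddSubgroup.pi_mem_of_single_mem s fun i => ?_
  have hmap := hS.map_eq_top (hf i) (hsurj i)
    (IsIdeal.finset_inf (fun j => IsIdeal.ker (hf j)) (T.erase i)) (hT i i.2)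
  obtain ⟨x, hx, hxs⟩ : s i ∈ AddSubgroup.map (f i) _ := hmap ▸ AddSubgroup.mem_top (s i)
  refine ⟨x, funext fun j => ?_⟩
  obtain rfl | hji := eq_or_ne j i
  · rw [Pi.single_eq_same]
    exact hxs
  · rw [Pi.single_eq_of_ne hji]
    have hj : (j : ι) ∈ T.erase i := Finset.mem_erase.2 ⟨Subtype.coe_ne_coe.2 hji, j.2⟩
    exact Finset.inf_le (f := fun j => (f j).ker) hj hx

end Simple

theorem injective_pi_of_inf_ker_eq_bot {G H ι : Type*} [AddGroup G] [AddGroup H]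
    {f : ι → G →+ H} {T : Finset ι} (hT : T.inf (fun i => (f i).ker) = ⊥) :
    Function.Injective fun (x : G) (i : T) => f i x := by
  let F : G →+ (T → H) := AddMonoidHom.pi fun i => f i
  refine (injective_iff_map_eq_zero F).2 fun x hx => ?_
  rw [← AddSubgroup.mem_bot, ← hT, Finset.inf_eq_iInf]
  simp only [AddSubgroup.mem_iInf]
  exact fun i hi => congrFun hx ⟨i, hi⟩

section FiniteInf

variable {α ι : Type*} [CompleteLattice α] {f : ι → α}

theorem exists_finset_inf_eq_iInf (hf : (Set.range fun T : Finset ι => T.inf f).IsWF) :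
    ∃ T : Finset ι, T.inf f = ⨅ i, f i := by
  classical
  obtain ⟨_, ⟨⟨T, rfl⟩, hmin⟩⟩ := hf.exists_minimal (Set.range_nonempty _)
  refine ⟨T, le_antisymm (le_iInf fun i => ?_) (Finset.le_inf fun i _ => iInf_le f i)⟩
  have hle : T.inf f ≤ (insert i T).inf f :=
    hmin ⟨insert i T, rfl⟩ (Finset.inf_mono (Finset.subset_insert i T))
  exact hle.trans (Finset.inf_le (Finset.mem_insert_self i T))

theorem exists_irredundant_finset_inf_eq_iInf [DecidableEq ι]
    (hf : (Set.range fun T : Finset ι => T.inf f).IsWF) :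
    ∃ T : Finset ι, T.inf f = ⨅ i, f i ∧ ∀ i ∈ T, ¬ (T.erase i).inf f ≤ f i := by
  obtain ⟨T, hT, hmin⟩ :=
    exists_minimal_of_wellFoundedLT (fun T : Finset ι => T.inf f = ⨅ i, f i)
      (exists_finset_inf_eq_iInf hf)
  refine ⟨T, hT, fun i hi hle => Finset.notMem_erase i T ?_⟩
  have herase : (T.erase i).inf f = T.inf f := by
    rw [← Finset.insert_erase hi, Finset.inf_insert, Finset.erase_insert (Finset.notMem_erase i T),
      inf_eq_right.2 hle]
  exact hmin (herase.trans hT) (Finset.erase_subset i T) hi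

end FiniteInf

section CharacteristicCore

variable {A : Type*} [SkewBrace A]

/-- The automorphism group `BrAut(A)` of a skew brace, as a subgroup of the automorphism group
of `(A,+)`; composition is written additively, as everywhere in `AddAut`. -/
def brAut (A : Type*) [SkewBrace A] : AddSubgroup (AddAut A) where
  carrier := {σ | IsBraceHom (σ : A →+ A)}
  add_mem' hσ hτ := hσ.comp hτ
  zero_mem' _ _ := rfl
  neg_mem' {σ} hσ x y := σ.injective <| by
    have h : σ (circ (σ.symm x) (σ.symm y)) = circ (σ (σ.symm x)) (σ (σ.symm y)) := hσ _ _
    rw [σ.apply_symm_apply, σ.apply_symm_apply] at h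
    exact (σ.apply_symm_apply _).trans h.symm

theorem IsBrAut.exists_brAut_coe_eq {σ : A → A} (hσ : IsBrAut σ) : ∃ τ : brAut A, ⇑τ.1 = σ :=
  ⟨⟨AddEquiv.ofBijective (AddMonoidHom.mk' σ hσ.2.1) hσ.1, hσ.2.2⟩, rfl⟩

/-- The characteristic core of an ideal `M`: the intersection of all its preimages under
automorphisms, which is the largest characteristic ideal contained in `M`. -/
def charCore (M : AddSubgroup A) : AddSubgroup A :=
  ⨅ σ : brAut A, M.comap (σ.1 : A →+ A)

theorem mem_charCore {M : AddSubgroup A} {x : A} :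
    x ∈ charCore M ↔ ∀ σ : brAut A, σ.1 x ∈ M :=
  AddSubgroup.mem_iInf

theorem charCore_le (M : AddSubgroup A) : charCore M ≤ M :=
  iInf_le (fun σ : brAut A => M.comap (σ.1 : A →+ A)) 0

theorem apply_mem_charCore_iff {M : AddSubgroup A} (σ : brAut A) {x : A} :
    σ.1 x ∈ charCore M ↔ x ∈ charCore M := by
  rw [mem_charCore, mem_charCore]
  exact (Equiv.addRight σ).forall_congr fun _ => Iff.rfl

theorem IsIdeal.isCharIdeal_charCore {M : AddSubgroup A} (hM : IsIdeal M) :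
    IsCharIdeal (charCore M) := by
  refine ⟨IsIdeal.iInf fun σ => hM.comap σ.2, fun σ hσ => ?_⟩
  obtain ⟨σ, rfl⟩ := hσ.exists_brAut_coe_eq
  have hpre : σ.1 ⁻¹' (charCore M : Set A) = charCore M :=
    Set.ext fun _ => apply_mem_charCore_iff σ
  calc σ.1 '' (charCore M : Set A) = σ.1 '' (σ.1 ⁻¹' charCore M) := by rw [hpre]
    _ = charCore M := Set.image_preimage_eq _ σ.1.surjective

theorem IsCharSimple.charCore_eq_bot (hA : IsCharSimple A) {M : AddSubgroup A} (hM : IsIdeal M)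
    (hne : M ≠ ⊤) : charCore M = ⊥ :=
  (hA.2 _ hM.isCharIdeal_charCore).resolve_right fun h => hne (top_le_iff.1 (h ▸ charCore_le M))

end CharacteristicCore

theorem stmt18_general {A : Type u} [SkewBrace A] (hA : IsCharSimple A)
    (hdcc : {I : AddSubgroup A | IsIdeal I}.IsWF)
    (hmax : ∃ M : AddSubgroup A, Maximal (fun I => IsIdeal I ∧ I ≠ ⊤) M) :
    ∃ (S : Type u) (instS : SkewBrace S) (n : ℕ), 0 < n ∧
      @IsSimpleSB S instS ∧
      ∃ e : A ≃ (Fin n → S),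
        (∀ (x y : A) (i : Fin n), e (x + y) i = @braceAdd S instS (e x i) (e y i)) ∧
        (∀ (x y : A) (i : Fin n), e (circ x y) i = @SkewBrace.circ S instS (e x i) (e y i)) := by
  classical
  have := hA.1
  obtain ⟨M, hM⟩ := hmax
  obtain ⟨S, instS, π, hπ, hπsurj, rfl⟩ := hM.prop.1.exists_surjective_ker_eq
  have hS : IsSimpleSB S := isSimpleSB_of_maximal_ker hπ hπsurj hM
  let f (σ : brAut A) : A →+ S := π.comp (σ.1 : A →+ A)
  have hf (σ) : IsBraceHom (f σ) := hπ.comp σ.2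
  have hcore : ⨅ σ, (f σ).ker = ⊥ := by
    simpa only [charCore, AddMonoidHom.comap_ker] using hA.charCore_eq_bot hM.prop.1 hM.prop.2
  obtain ⟨T, hTinf, hT⟩ := exists_irredundant_finset_inf_eq_iInf <| hdcc.mono <|
    Set.range_subset_iff.2 <| IsIdeal.finset_inf fun σ => IsIdeal.ker (hf σ)
  rw [hcore] at hTinf
  have hTpos : 0 < T.card := Finset.card_pos.2 <| Finset.nonempty_iff_ne_empty.2 <| by
    rintro rfl
    exact top_ne_bot hTinf
  have hinj := injective_pi_of_inf_ker_eq_bot hTinf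
  have hsurj := hS.surjective_pi hf (fun σ => hπsurj.comp σ.1.surjective) hT
  let e : A ≃ (Fin T.card → S) :=
    (Equiv.ofBijective _ ⟨hinj, hsurj⟩).trans (T.equivFin.arrowCongr (Equiv.refl S))
  exact ⟨S, instS, T.card, hTpos, hS, e, fun x y i => map_add (f (T.equivFin.symm i)) x y,
    fun x y i => hf (T.equivFin.symm i) x y⟩

/-- a finite characteristically simple skew brace is isomorphic, as a skew
brace, to a direct power `S^n` (componentwise operations) of a simple skew brace `S`. -/
theorem stmt18 {A : Type u} [SkewBrace A] [Finite A] (h : IsCharSimple A) :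
    ∃ (S : Type u) (instS : SkewBrace S) (n : ℕ), 0 < n ∧
      @IsSimpleSB S instS ∧
      ∃ e : A ≃ (Fin n → S),
        (∀ (x y : A) (i : Fin n), e (x + y) i = @braceAdd S instS (e x i) (e y i)) ∧
        (∀ (x y : A) (i : Fin n), e (circ x y) i = @SkewBrace.circ S instS (e x i) (e y i)) :=
  haveI := h.1
  stmt18_general h (Set.toFinite _).isWF <|
    (Set.toFinite {I : AddSubgroup A | IsIdeal I ∧ I ≠ ⊤}).exists_maximal ⟨⊥, .bot, bot_ne_top⟩
end

section
/- Let S be a finite simple skew left brace and n a positive integer. Then the direct product A = S^n (with componentwise operations) is a characteristically simple skew left brace: its only characteristic ideals are 0 and A. -/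
open SkewBrace

/-- The direct product `S^n` with componentwise skew brace structure. -/
instance piSkewBrace {n : ℕ} {S : Type*} [SkewBrace S] : SkewBrace (Fin n → S) :=
  { Pi.addGroup with
    circ := fun x y i => circ (x i) (y i)
    cinv := fun x i => cinv (x i)
    circ_assoc := fun a b c => funext fun i => circ_assoc (a i) (b i) (c i)
    zero_circ := fun a => funext fun i => zero_circ (a i)
    circ_zero := fun a => funext fun i => circ_zero (a i)
    cinv_circ := fun a => funext fun i => cinv_circ (a i)
    circ_cinv := fun a => funext fun i => circ_cinv (a i)
    compat := fun a b c => funext fun i => compat (a i) (b i) (c i) }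

/-!
An ideal `I` of `S ^ n` meets each factor in an ideal of `S`, which is `0` or `S`. Permuting the
factors shows that if `I` contains one factor, it contains all of them. If instead `I` meets the
`i`-th factor trivially, then for `x ∈ I` and `s` in that factor the elements `s + x - s`, `λ_s(x)`
and `s ∘ x ∘ s⁻¹` of `I` differ from `x` only in coordinate `i`, hence equal `x`; so `x i` lies in
the annihilator of `S`. The annihilator is an ideal of `S`. If it is `0`, then `I = 0`. If it is
`S`, adding the `i`-th coordinate to the `j`-th one is an automorphism of `S ^ n`; it changes
`x ∈ I` only in coordinate `j`, hence not at all, so `x i = 0`.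
-/

namespace SkewBrace

section Basic

variable {A B : Type*} [SkewBrace A] [SkewBrace B]

theorem circ_eq_add_lam (a b : A) : circ a b = a + lam a b :=
  (add_neg_cancel_left a _).symm

theorem zero_lam (a : A) : lam 0 a = a := by
  rw [lam, neg_zero, zero_add, zero_circ]

theorem lam_add (a b c : A) : lam a (b + c) = lam a b + lam a c := by
  simp only [lam, compat, add_assoc]

theorem lam_zero (a : A) : lam a 0 = 0 := by
  rw [lam, circ_zero, neg_add_cancel]

theorem lam_neg (a b : A) : lam a (-b) = -lam a b := by
  rw [eq_neg_iff_add_eq_zero, ← lam_add, neg_add_cancel, lam_zero]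

theorem cinv_eq_of_circ_eq_zero {a b : A} (h : circ b a = 0) : cinv a = b := by
  rw [← zero_circ (cinv a), ← h, circ_assoc, circ_cinv, circ_zero]

theorem cinv_zero : cinv (0 : A) = 0 :=
  cinv_eq_of_circ_eq_zero (zero_circ 0)

theorem circ_circ_cinv_eq_iff {a b : A} : circ (circ a b) (cinv a) = b ↔ circ a b = circ b a := by
  constructor <;> intro h
  · nth_rw 2 [← h]
    rw [circ_assoc, cinv_circ, circ_zero]
  · rw [h, circ_assoc, circ_cinv, circ_zero]

theorem map_lam (f : A →+ B) (hf : ∀ a b, f (circ a b) = circ (f a) (f b)) (a b : A) :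
    f (lam a b) = lam (f a) (f b) := by
  rw [lam, map_add, map_neg, hf, lam]

theorem map_cinv (f : A →+ B) (hf : ∀ a b, f (circ a b) = circ (f a) (f b)) (a : A) :
    f (cinv a) = cinv (f a) :=
  (cinv_eq_of_circ_eq_zero (by rw [← hf, cinv_circ, map_zero])).symm

theorem isIdeal_comap {I : AddSubgroup B} (hI : IsIdeal I) (f : A →+ B)
    (hf : ∀ a b, f (circ a b) = circ (f a) (f b)) : IsIdeal (I.comap f) := by
  obtain ⟨hlam, hnormal, hcirc⟩ := hI
  refine ⟨fun a x hx => ?_, hnormal.comap f, fun a x hx => ?_⟩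
  · rw [AddSubgroup.mem_comap, map_lam f hf]
    exact hlam (f a) (f x) hx
  · rw [AddSubgroup.mem_comap, hf, hf, map_cinv f hf]
    exact hcirc (f a) (f x) hx

theorem apply_mem_of_isCharIdeal {I : AddSubgroup A} (hI : IsCharIdeal I) {σ : A → A}
    (hσ : IsBrAut σ) {x : A} (hx : x ∈ I) : σ x ∈ I := by
  rw [← SetLike.mem_coe, ← hI.2 σ hσ]
  exact Set.mem_image_of_mem σ hx

end Basic

section Annihilator

variable {A : Type*} [SkewBrace A]

variable (A) in
/-- The annihilator of a skew left brace: the elements that are central in `(A,+)`, central in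
`(A,∘)` and fixed by every `λ_a`. It is the analogue for skew braces of the centre of a group. -/
def annihilator : AddSubgroup A where
  carrier := {z | ∀ a : A, a + z = z + a ∧ lam a z = z ∧ circ a z = circ z a}
  zero_mem' a := ⟨by rw [add_zero, zero_add], lam_zero a, by rw [circ_zero, zero_circ]⟩
  add_mem' {z w} hz hw a := by
    refine ⟨?_, by rw [lam_add, (hz a).2.1, (hw a).2.1], ?_⟩
    · rw [← add_assoc, (hz a).1, add_assoc, (hw a).1, add_assoc]
    · have hzw : z + w = circ z w := by rw [circ_eq_add_lam, (hw z).2.1]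
      rw [hzw, ← circ_assoc, (hz a).2.2, circ_assoc, (hw a).2.2, circ_assoc]
  neg_mem' {z} hz a := by
    have hlam (b : A) : lam b (-z) = -z := by rw [lam_neg, (hz b).2.1]
    refine ⟨AddCommute.neg_right (hz a).1, hlam a, ?_⟩
    have hcinv : cinv z = -z :=
      cinv_eq_of_circ_eq_zero (by rw [circ_eq_add_lam, (hz _).2.1, neg_add_cancel])
    calc circ a (-z) = circ (circ (cinv z) (circ z a)) (cinv z) := by
          rw [← circ_assoc (cinv z), cinv_circ, zero_circ, hcinv]
      _ = circ (-z) a := by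
          rw [← (hz a).2.2, circ_assoc, circ_assoc, circ_cinv, circ_zero, hcinv]

theorem add_comm_of_mem_annihilator {z : A} (hz : z ∈ annihilator A) (a : A) : a + z = z + a :=
  (hz a).1

theorem lam_eq_of_mem_annihilator {z : A} (hz : z ∈ annihilator A) (a : A) : lam a z = z :=
  (hz a).2.1

theorem circ_eq_add_of_mem_annihilator {z : A} (hz : z ∈ annihilator A) (a : A) :
    circ a z = a + z := by
  rw [circ_eq_add_lam, lam_eq_of_mem_annihilator hz]

theorem circ_comm_of_mem_annihilator {z : A} (hz : z ∈ annihilator A) (a : A) :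
    circ a z = circ z a :=
  (hz a).2.2

variable (A) in
theorem isIdeal_annihilator : IsIdeal (annihilator A) := by
  refine ⟨fun a z hz => ?_, ⟨fun z hz a => ?_⟩, fun a z hz => ?_⟩
  · rwa [lam_eq_of_mem_annihilator hz]
  · rwa [add_comm_of_mem_annihilator hz, add_neg_cancel_right]
  · rwa [circ_circ_cinv_eq_iff.2 (circ_comm_of_mem_annihilator hz a)]

theorem isBrAut_add_of_mem_annihilator (f : A →+ A) (hcirc : ∀ a b, f (circ a b) = f a + f b)
    (hf : ∀ a, f a ∈ annihilator A) (hff : ∀ a, f (f a) = 0) : IsBrAut fun a => a + f a := by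
  refine ⟨⟨fun a b hab => ?_, fun a => ⟨a + -f a, ?_⟩⟩, fun a b => ?_, fun a b => ?_⟩
  · have hfab : f a = f b := by simpa [hff] using congrArg f hab
    simpa only [hfab, add_left_inj] using hab
  · simp [hff]
  · simp only [map_add, add_assoc]
    rw [← add_assoc b, add_comm_of_mem_annihilator (hf a), add_assoc]
  · calc circ a b + f (circ a b) = circ (circ a b) (circ (f a) (f b)) := by
          rw [hcirc, circ_eq_add_of_mem_annihilator (hf b),
            circ_eq_add_of_mem_annihilator (add_mem (hf a) (hf b))]
      _ = circ (circ a (f a)) (circ b (f b)) := by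
          rw [circ_assoc, circ_assoc, ← circ_assoc b, circ_comm_of_mem_annihilator (hf a),
            circ_assoc]
      _ = circ (a + f a) (b + f b) := by
          rw [circ_eq_add_of_mem_annihilator (hf a), circ_eq_add_of_mem_annihilator (hf b)]

end Annihilator

section Pi

variable {S : Type*} [SkewBrace S] {n : ℕ}

theorem pi_circ_apply (x y : Fin n → S) (i : Fin n) : circ x y i = circ (x i) (y i) :=
  rfl

theorem pi_cinv_apply (x : Fin n → S) (i : Fin n) : cinv x i = cinv (x i) :=
  rfl

theorem pi_lam_apply (x y : Fin n → S) (i : Fin n) : lam x y i = lam (x i) (y i) :=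
  rfl

theorem single_circ (i : Fin n) (a b : S) :
    (Pi.single i (circ a b) : Fin n → S) = circ (Pi.single i a) (Pi.single i b) :=
  Pi.single_op₂ (fun _ => circ (A := S)) (fun _ => zero_circ 0) i a b

theorem single_mem_annihilator {z : S} (hz : z ∈ annihilator S) (i : Fin n) :
    (Pi.single i z : Fin n → S) ∈ annihilator (Fin n → S) := by
  refine fun x => ⟨funext fun j => ?_, funext fun j => ?_, funext fun j => ?_⟩ <;>
    obtain rfl | hj := eq_or_ne j i
  · simpa using add_comm_of_mem_annihilator hz (x j)
  · simp [hj]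
  · simpa [pi_lam_apply] using lam_eq_of_mem_annihilator hz (x j)
  · simp [pi_lam_apply, hj, lam_zero]
  · simpa [pi_circ_apply] using circ_comm_of_mem_annihilator hz (x j)
  · simp [pi_circ_apply, hj, circ_zero, zero_circ]

theorem isBrAut_comp_perm (e : Equiv.Perm (Fin n)) : IsBrAut fun x : Fin n → S => x ∘ e :=
  ⟨(e.arrowCongr (Equiv.refl S)).symm.bijective, fun _ _ => rfl, fun _ _ => rfl⟩

theorem isBrAut_add_single (hS : annihilator S = ⊤) {i j : Fin n} (hij : i ≠ j) :
    IsBrAut fun x : Fin n → S => x + Pi.single j (x i) := by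
  have hmem (a : S) : a ∈ annihilator S := hS ▸ AddSubgroup.mem_top a
  refine isBrAut_add_of_mem_annihilator
    ((AddMonoidHom.single (fun _ => S) j).comp (Pi.evalAddMonoidHom (fun _ => S) i))
    (fun x y => ?_) (fun x => single_mem_annihilator (hmem _) j) (fun x => ?_)
  · rw [← map_add]
    exact congrArg (Pi.single j) (circ_eq_add_of_mem_annihilator (hmem _) _)
  · simp [hij]

/-- The `i`-th component of an additive subgroup `I` of `S ^ n`: its intersection with the `i`-th
factor, seen as a subgroup of `S`. -/
def component (I : AddSubgroup (Fin n → S)) (i : Fin n) : AddSubgroup S :=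
  I.comap (AddMonoidHom.single (fun _ => S) i)

theorem mem_component {I : AddSubgroup (Fin n → S)} {i : Fin n} {s : S} :
    s ∈ component I i ↔ Pi.single i s ∈ I :=
  Iff.rfl

theorem isIdeal_component {I : AddSubgroup (Fin n → S)} (hI : IsIdeal I) (i : Fin n) :
    IsIdeal (component I i) :=
  isIdeal_comap hI _ (single_circ i)

theorem component_le_component {I : AddSubgroup (Fin n → S)} (hI : IsCharIdeal I) (i j : Fin n) :
    component I i ≤ component I j := by
  intro s hs
  have hswap : (Pi.single i s : Fin n → S) ∘ Equiv.swap i j ∈ I :=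
    apply_mem_of_isCharIdeal hI (isBrAut_comp_perm (Equiv.swap i j)) hs
  rwa [Pi.single_comp_equiv, Equiv.symm_swap, Equiv.swap_apply_left] at hswap

theorem eq_top_of_component_eq_top {I : AddSubgroup (Fin n → S)}
    (h : ∀ i, component I i = ⊤) : I = ⊤ :=
  (AddSubgroup.eq_top_iff' I).2 fun x => AddSubgroup.pi_mem_of_single_mem x fun i =>
    mem_component.1 (h i ▸ AddSubgroup.mem_top (x i))

theorem eq_of_component_eq_bot {I : AddSubgroup (Fin n → S)} {i : Fin n}
    (hi : component I i = ⊥) {x y : Fin n → S} (hx : x ∈ I) (hy : y ∈ I)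
    (hxy : ∀ j ≠ i, x j = y j) : x = y := by
  have hsingle : x - y = Pi.single i (x i - y i) := by
    funext j
    obtain rfl | hj := eq_or_ne j i
    · simp
    · simp [hj, hxy j hj]
  have hmem : x i - y i ∈ component I i := mem_component.2 (hsingle ▸ I.sub_mem hx hy)
  rw [hi, AddSubgroup.mem_bot] at hmem
  rwa [hmem, Pi.single_zero, sub_eq_zero] at hsingle

theorem apply_mem_annihilator_of_component_eq_bot {I : AddSubgroup (Fin n → S)}
    (hI : IsIdeal I) {i : Fin n} (hi : component I i = ⊥) {x : Fin n → S} (hx : x ∈ I) :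
    x i ∈ annihilator S := by
  obtain ⟨hlam, hnormal, hcirc⟩ := hI
  intro s
  have hadd_eq : Pi.single i s + x + -Pi.single i s = x :=
    eq_of_component_eq_bot hi (hnormal.conj_mem x hx _) hx fun j hj => by simp [hj]
  have hlam_eq : lam (Pi.single i s) x = x :=
    eq_of_component_eq_bot hi (hlam _ x hx) hx fun j hj => by
      rw [pi_lam_apply, Pi.single_eq_of_ne hj, zero_lam]
  have hcirc_eq : circ (circ (Pi.single i s) x) (cinv (Pi.single i s)) = x :=
    eq_of_component_eq_bot hi (hcirc _ x hx) hx fun j hj => by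
      rw [pi_circ_apply, pi_circ_apply, pi_cinv_apply, Pi.single_eq_of_ne hj, zero_circ,
        cinv_zero, circ_zero]
  rw [add_neg_eq_iff_eq_add] at hadd_eq
  rw [circ_circ_cinv_eq_iff] at hcirc_eq
  refine ⟨?_, ?_, ?_⟩
  · simpa using congrFun hadd_eq i
  · simpa [pi_lam_apply] using congrFun hlam_eq i
  · simpa [pi_circ_apply] using congrFun hcirc_eq i

theorem eq_bot_of_annihilator_eq_top (hS : annihilator S = ⊤) {I : AddSubgroup (Fin n → S)}
    (hI : IsCharIdeal I) (h : ∀ i, component I i = ⊥) : I = ⊥ := by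
  refine (AddSubgroup.eq_bot_iff_forall I).2 fun x hx => funext fun i => ?_
  by_cases hj : ∃ j, i ≠ j
  · obtain ⟨j, hij⟩ := hj
    have hfixed : x + Pi.single j (x i) = x :=
      eq_of_component_eq_bot (h j) (apply_mem_of_isCharIdeal hI (isBrAut_add_single hS hij) hx) hx
        fun k hk => by simp [hk]
    simpa using congrFun hfixed j
  · push Not at hj
    exact congrFun (eq_of_component_eq_bot (h i) hx I.zero_mem fun k hk => (hk (hj k).symm).elim) i

end Pi

end SkewBrace

theorem stmt19_general {S : Type*} [SkewBrace S] (hS : IsSimpleSB S) (n : ℕ)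
    (I : AddSubgroup (Fin n → S)) (hI : IsCharIdeal I) : I = ⊥ ∨ I = ⊤ := by
  by_cases hex : ∃ i, component I i = ⊤
  · obtain ⟨i, hi⟩ := hex
    exact .inr (eq_top_of_component_eq_top fun j =>
      top_le_iff.1 (hi ▸ component_le_component hI i j))
  · push Not at hex
    have hbot (i : Fin n) : component I i = ⊥ :=
      (hS.2 _ (isIdeal_component hI.1 i)).resolve_right (hex i)
    left
    obtain hann | hann := hS.2 _ (isIdeal_annihilator S)
    · refine (AddSubgroup.eq_bot_iff_forall I).2 fun x hx => funext fun i => ?_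
      have hxi : x i ∈ annihilator S :=
        apply_mem_annihilator_of_component_eq_bot hI.1 (hbot i) hx
      rwa [hann, AddSubgroup.mem_bot] at hxi
    · exact eq_bot_of_annihilator_eq_top hann hI hbot

/-- if `S` is a finite simple skew brace and `n` is a positive integer,
then the direct product `S^n` is characteristically simple: its only characteristic
ideals are `0` and the whole brace. -/
theorem stmt19 {S : Type*} [SkewBrace S] [Finite S] (hS : IsSimpleSB S)
    (n : ℕ) (hn : 0 < n) :
    ∀ I : AddSubgroup (Fin n → S), IsCharIdeal I → I = ⊥ ∨ I = ⊤ :=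
  fun I hI => stmt19_general hS n I hI
end
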